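/- arXiv:1401.5037 — 2 statements merged into one kernel-verified Lean document; each statement's English description precedes it below -/
import Mathlib

section
/- Let m ≥ 3. If the singleton partition S is the unique minimizer of Δ, i.e., Δ(S) < Δ(P) for every partition P of [m] with |P| ≥ 2 and P ≠ S, then for every T ⊂ [m] with |T| = m−1 and every vector (R_i)_{i∈T} in the rate region R_T, one has H(X_T) − Σ_{i∈T} R_i < Δ(S). (Core inequality of Theorem 2: by the Gohari–Anantharam formula C([m]‖T) = H(X_T) − min_{R∈R_T} Σ_i R_i, this says that the secret key capacity achievable with terminal [m]\T silent is strictly smaller than the unconstrained capacity Δ(S), so omnivocal communication is necessary.) -/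
open MeasureTheory Finset

/-- Shannon entropy (natural log) of a random variable with values in a finite set. -/
noncomputable def shannonEntropy {Ω : Type*} [MeasurableSpace Ω] (μ : Measure Ω)
    {S : Type*} [Fintype S] (Y : Ω → S) : ℝ :=
  ∑ s : S, Real.negMulLog (μ (Y ⁻¹' {s})).toReal

/-- `HX μ X A` is the Shannon entropy of the tuple `X_A = (X_i : i ∈ A)`. -/
noncomputable def HX {m : ℕ} {Ω : Type*} [MeasurableSpace Ω] (μ : Measure Ω)
    {𝒳 : Fin m → Type*} [∀ i, Fintype (𝒳 i)] (X : ∀ i, Ω → 𝒳 i)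
    (A : Finset (Fin m)) : ℝ :=
  shannonEntropy μ (fun ω => fun i : A => X i ω)

/-- Conditional entropy `H(X_A | X_B)`. -/
noncomputable def condEnt {m : ℕ} {Ω : Type*} [MeasurableSpace Ω] (μ : Measure Ω)
    {𝒳 : Fin m → Type*} [∀ i, Fintype (𝒳 i)] (X : ∀ i, Ω → 𝒳 i)
    (A B : Finset (Fin m)) : ℝ :=
  HX μ X (A ∪ B) - HX μ X B

/-- `P` is a partition of `[m]` into nonempty cells. -/
def IsPartition {m : ℕ} (P : Finset (Finset (Fin m))) : Prop :=
  (∀ A ∈ P, A.Nonempty) ∧ ∀ i : Fin m, ∃! A, A ∈ P ∧ i ∈ A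

/-- The singleton partition `S = {{1},…,{m}}` of `[m]`. -/
def sPart (m : ℕ) : Finset (Finset (Fin m)) := Finset.univ.image fun i => {i}

/-- `Δ(P) = (1/(|P|−1))·[Σ_{A∈P} H(X_A) − H(X_{[m]})]`. -/
noncomputable def ΔP {m : ℕ} {Ω : Type*} [MeasurableSpace Ω] (μ : Measure Ω)
    {𝒳 : Fin m → Type*} [∀ i, Fintype (𝒳 i)] (X : ∀ i, Ω → 𝒳 i)
    (P : Finset (Finset (Fin m))) : ℝ :=
  (1 / ((P.card : ℝ) - 1)) * (∑ A ∈ P, HX μ X A - HX μ X Finset.univ)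

/-!
Let `P` be the partition consisting of the cell `T` and the singletons outside `T`. For a set
function `h`, write `Δ_T` for the functional `Δ` of the singleton partition of `T` alone. Then
`(m - 1) Δ(S) = (m - |T|) Δ(P) + (|T| - 1) Δ_T`, so `Δ(S)` is a weighted mean of `Δ(P)` and `Δ_T`,
and `Δ(S) < Δ(P)` forces `Δ_T < Δ(S)`. On the other hand, the rate constraints of the sets `{i}ᶜ`,
`i ∈ T`, sum up to `(|T| - 1) R(T) ≥ |T| h(T) - ∑ i ∈ T, h {i}`, that is, `h(T) - R(T) ≤ Δ_T`.
-/

section SetFunction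

variable {V : Type*}

/-- The functional `Δ` of a partition `P` of a ground set `W`, for an arbitrary set function `h` in
place of the entropy. Its value is the junk `0` when `P` has a single cell. -/
noncomputable def partitionExcess (h : Finset V → ℝ) (W : Finset V) (P : Finset (Finset V)) : ℝ :=
  (1 / ((#P : ℝ) - 1)) * (∑ A ∈ P, h A - h W)

theorem card_sub_one_mul_partitionExcess (h : Finset V → ℝ) (W : Finset V)
    {P : Finset (Finset V)} (hP : 1 < #P) :
    ((#P : ℝ) - 1) * partitionExcess h W P = ∑ A ∈ P, h A - h W := by
  have hP' : (#P : ℝ) - 1 ≠ 0 := sub_ne_zero.2 (by exact_mod_cast hP.ne')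
  rw [partitionExcess, ← mul_assoc, mul_one_div_cancel hP', one_mul]

variable [DecidableEq V]

/-- The partition of a ground set `W` into singletons. -/
def singletonCells (W : Finset V) : Finset (Finset V) := W.image fun i => {i}

theorem card_singletonCells (W : Finset V) : #(singletonCells W) = #W :=
  card_image_of_injective W singleton_injective

theorem sum_singletonCells (h : Finset V → ℝ) (W : Finset V) :
    ∑ A ∈ singletonCells W, h A = ∑ i ∈ W, h {i} :=
  sum_image fun _ _ _ _ hij => singleton_injective hij

theorem notMem_singletonCells {T : Finset V} (hT : T.Nontrivial) (W : Finset V) :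
    T ∉ singletonCells W := by
  intro hmem
  obtain ⟨i, -, rfl⟩ := mem_image.1 hmem
  exact not_nontrivial_singleton hT

theorem card_sub_one_mul_partitionExcess_singletonCells (h : Finset V → ℝ) {T : Finset V}
    (hT : T.Nontrivial) (W : Finset V) :
    ((#T : ℝ) - 1) * partitionExcess h W (singletonCells T) = ∑ i ∈ T, h {i} - h W := by
  rw [← sum_singletonCells, ← card_singletonCells T]
  refine card_sub_one_mul_partitionExcess h W ?_
  rwa [card_singletonCells, one_lt_card_iff_nontrivial]

theorem sum_sum_erase {K : Type*} [Ring K] (T : Finset V) (f : V → K) :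
    ∑ i ∈ T, ∑ j ∈ T.erase i, f j = ((#T : K) - 1) * ∑ i ∈ T, f i := by
  calc ∑ i ∈ T, ∑ j ∈ T.erase i, f j
      = ∑ i ∈ T, (∑ j ∈ T, f j - f i) := sum_congr rfl fun _ hi => sum_erase_eq_sub hi
    _ = ((#T : K) - 1) * ∑ i ∈ T, f i := by
      rw [sum_sub_distrib, sum_const, nsmul_eq_mul, sub_one_mul]

variable [Fintype V]

/-- The partition of `V` into the cell `T` and the singletons outside `T`; it is `{T, Tᶜ}` when a
single terminal is silent. -/
def mergedCells (T : Finset V) : Finset (Finset V) := insert T (singletonCells Tᶜ)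

theorem card_mergedCells {T : Finset V} (hT : T.Nontrivial) : #(mergedCells T) = #Tᶜ + 1 := by
  rw [mergedCells, card_insert_of_notMem (notMem_singletonCells hT _), card_singletonCells]

theorem one_lt_card_mergedCells {T : Finset V} (hT : T.Nontrivial) (hTuniv : T ≠ univ) :
    1 < #(mergedCells T) := by
  rw [card_mergedCells hT, Nat.lt_add_left_iff_pos, card_pos, nonempty_iff_ne_empty]
  exact mt (compl_eq_empty_iff T).1 hTuniv

theorem sum_mergedCells (h : Finset V → ℝ) {T : Finset V} (hT : T.Nontrivial) :
    ∑ A ∈ mergedCells T, h A = h T + ∑ i ∈ Tᶜ, h {i} := by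
  rw [mergedCells, sum_insert (notMem_singletonCells hT _), sum_singletonCells]

theorem mergedCells_ne_singletonCells {T : Finset V} (hT : T.Nontrivial) (W : Finset V) :
    mergedCells T ≠ singletonCells W := fun heq =>
  notMem_singletonCells hT W (heq ▸ mem_insert_self T _)

theorem partitionExcess_singletonCells_decomp (h : Finset V → ℝ) {T : Finset V}
    (hT : T.Nontrivial) (hTuniv : T ≠ univ) :
    ((#T : ℝ) - 1 + #Tᶜ) * partitionExcess h univ (singletonCells univ) =
      #Tᶜ * partitionExcess h univ (mergedCells T) +
        ((#T : ℝ) - 1) * partitionExcess h T (singletonCells T) := by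
  have hS := card_sub_one_mul_partitionExcess_singletonCells h (hT.mono (subset_univ T)) univ
  have hM := card_sub_one_mul_partitionExcess h univ (one_lt_card_mergedCells hT hTuniv)
  have hST := card_sub_one_mul_partitionExcess_singletonCells h hT T
  have hcard : (#T : ℝ) + #Tᶜ = #(univ : Finset V) := by exact_mod_cast card_add_card_compl T
  rw [← hcard] at hS
  rw [card_mergedCells hT, sum_mergedCells h hT, Nat.cast_succ] at hM
  linarith [sum_add_sum_compl T fun i => h {i}]

theorem partitionExcess_singletonCells_lt {h : Finset V → ℝ} {T : Finset V}
    (hT : T.Nontrivial) (hTuniv : T ≠ univ)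
    (hlt : partitionExcess h univ (singletonCells univ) <
      partitionExcess h univ (mergedCells T)) :
    partitionExcess h T (singletonCells T) < partitionExcess h univ (singletonCells univ) := by
  have hcT : (0 : ℝ) < #T - 1 := sub_pos.2 (by exact_mod_cast one_lt_card_iff_nontrivial.2 hT)
  have hcTc : (0 : ℝ) < #Tᶜ := by
    exact_mod_cast Nat.succ_lt_succ_iff.1 (card_mergedCells hT ▸ one_lt_card_mergedCells hT hTuniv)
  refine lt_of_mul_lt_mul_left ?_ hcT.le
  linarith [partitionExcess_singletonCells_decomp h hT hTuniv, mul_lt_mul_of_pos_left hlt hcTc]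

/-- The rate region `R_T`, for an arbitrary set function `h` in place of the entropy. A rate vector
is indexed by all of `V`; its coordinates outside `T` are not constrained. -/
def rateRegion (h : Finset V → ℝ) (T : Finset V) : Set (V → ℝ) :=
  {R | ∀ A : Finset V, A ⊂ univ → (A ∩ T).Nonempty →
    ∑ i ∈ A ∩ T, R i ≥ h (A ∩ T ∪ Aᶜ) - h Aᶜ}

theorem sub_singleton_le_sum_erase_of_mem_rateRegion {h : Finset V → ℝ} {T : Finset V} {R : V → ℝ}
    (hR : R ∈ rateRegion h T) (hT : T.Nontrivial) {i : V} (hi : i ∈ T) :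
    h T - h {i} ≤ ∑ j ∈ T.erase i, R j := by
  have hinter : {i}ᶜ ∩ T = T.erase i := by
    rw [inter_comm, ← sdiff_eq_inter_compl, sdiff_singleton_eq_erase]
  have hproper : ({i}ᶜ : Finset V) ⊂ univ := by simp [ssubset_univ_iff]
  have hRi := hR {i}ᶜ hproper (hinter ▸ hT.erase_nonempty)
  rwa [hinter, compl_compl, union_comm, ← insert_eq, insert_erase hi] at hRi

theorem sub_sum_le_partitionExcess_of_mem_rateRegion {h : Finset V → ℝ} {T : Finset V} {R : V → ℝ}
    (hR : R ∈ rateRegion h T) (hT : T.Nontrivial) :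
    h T - ∑ i ∈ T, R i ≤ partitionExcess h T (singletonCells T) := by
  have hcT : 1 < #T := one_lt_card_iff_nontrivial.2 hT
  have hsum : #T * h T - ∑ i ∈ T, h {i} ≤ ((#T : ℝ) - 1) * ∑ i ∈ T, R i := by
    rw [← sum_sum_erase, ← nsmul_eq_mul, ← sum_const, ← sum_sub_distrib]
    exact sum_le_sum fun i hi => sub_singleton_le_sum_erase_of_mem_rateRegion hR hT hi
  refine le_of_mul_le_mul_left ?_ (sub_pos.2 (Nat.one_lt_cast.2 hcT) : (0 : ℝ) < #T - 1)
  linarith [card_sub_one_mul_partitionExcess_singletonCells h hT T]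

theorem stmt4_general {h : Finset V → ℝ} {T : Finset V} {R : V → ℝ}
    (hT : T.Nontrivial) (hTuniv : T ≠ univ)
    (hlt : partitionExcess h univ (singletonCells univ) <
      partitionExcess h univ (mergedCells T))
    (hR : R ∈ rateRegion h T) :
    h T - ∑ i ∈ T, R i < partitionExcess h univ (singletonCells univ) :=
  (sub_sum_le_partitionExcess_of_mem_rateRegion hR hT).trans_lt
    (partitionExcess_singletonCells_lt hT hTuniv hlt)

end SetFunction

theorem isPartition_mergedCells {m : ℕ} {T : Finset (Fin m)} (hT : T.Nonempty) :
    IsPartition (mergedCells T) := by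
  have mem_iff (A : Finset (Fin m)) : A ∈ mergedCells T ↔ A = T ∨ ∃ j ∉ T, {j} = A := by
    simp only [mergedCells, singletonCells, mem_insert, mem_image, mem_compl]
  refine ⟨fun A hA => ?_, fun i => ?_⟩
  · obtain rfl | ⟨j, -, rfl⟩ := (mem_iff A).1 hA
    exacts [hT, singleton_nonempty j]
  · by_cases hi : i ∈ T
    · refine ⟨T, ⟨(mem_iff T).2 (.inl rfl), hi⟩, fun A ⟨hA, hiA⟩ => ?_⟩
      obtain rfl | ⟨j, hj, rfl⟩ := (mem_iff A).1 hA
      exacts [rfl, absurd (mem_singleton.1 hiA ▸ hi) hj]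
    · refine ⟨{i}, ⟨(mem_iff _).2 (.inr ⟨i, hi, rfl⟩), mem_singleton_self i⟩,
        fun A ⟨hA, hiA⟩ => ?_⟩
      obtain rfl | ⟨j, -, rfl⟩ := (mem_iff A).1 hA
      exacts [absurd hiA hi, by rw [mem_singleton.1 hiA]]

/-- Core inequality of Theorem 2: if the singleton partition is the unique minimizer
of `Δ`, then for every `T ⊂ [m]` with `|T| = m−1` and every point `(R_i)_{i∈T}` of the
rate region `R_T`, we have `H(X_T) − Σ_{i∈T} R_i < Δ(S)`. -/
theorem stmt4 {m : ℕ} (hm : 3 ≤ m) {Ω : Type*} [MeasurableSpace Ω] (μ : Measure Ω)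
    [IsProbabilityMeasure μ]
    {𝒳 : Fin m → Type*} [∀ i, Fintype (𝒳 i)] [∀ i, MeasurableSpace (𝒳 i)]
    [∀ i, MeasurableSingletonClass (𝒳 i)]
    (X : ∀ i, Ω → 𝒳 i) (hX : ∀ i, Measurable (X i))
    (hmin : ∀ P : Finset (Finset (Fin m)), IsPartition P → 2 ≤ P.card → P ≠ sPart m →
        ΔP μ X (sPart m) < ΔP μ X P) :
    ∀ T : Finset (Fin m), T ⊂ Finset.univ → T.card = m - 1 →
      ∀ R : Fin m → ℝ,
        (∀ A : Finset (Fin m), A ⊂ Finset.univ → (A ∩ T).Nonempty →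
            ∑ i ∈ A ∩ T, R i ≥ condEnt μ X (A ∩ T) Aᶜ) →
        HX μ X T - ∑ i ∈ T, R i < ΔP μ X (sPart m) := by
  intro T hT hcard R hR
  have hnt : T.Nontrivial := one_lt_card_iff_nontrivial.1 (by omega)
  exact stmt4_general hnt hT.ne (hmin _ (isPartition_mergedCells hnt.nonempty)
    (one_lt_card_mergedCells hnt hT.ne) (mergedCells_ne_singletonCells hnt univ)) hR
end

section
/- Let m ≥ 3 and let Ω = {B ⊂ [m] : 1 ≤ |B| ≤ m−2}. The singleton partition S satisfies Δ(S) ≤ Δ(P) for every partition P of [m] with |P| ≥ 2 if and only if Δ(S) ≤ Δ(P_B) for every B ∈ Ω. (Proposition 1(a).) -/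
open MeasureTheory Finset

/-- For nonempty `B ⊊ [m]`, the partition `P_B` consisting of the cell `Bᶜ`
together with the singleton cells `{b}`, `b ∈ B`. -/
def partB {m : ℕ} (B : Finset (Fin m)) : Finset (Finset (Fin m)) :=
  insert Bᶜ (B.image fun b => ({b} : Finset (Fin m)))

/-!
For a set function `h` on the subsets of `s`, write `T(A) = ∑_{i ∈ A} h({i}) - h(A)`, so that the
singleton partition `S` of `s` has `Δ(S) = T(s) / (|s| - 1) =: δ`. The total correlation of a
partition `P` is `T(s) - ∑_{A ∈ P} T(A)`, and `∑_{A ∈ P} (|A| - 1) = |s| - |P|`, so `Δ(S) ≤ Δ(P)`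
means `∑_{A ∈ P} T(A) ≤ ∑_{A ∈ P} (|A| - 1) δ`. Singleton cells contribute `0` to both sides. For
`P_B` this is therefore the single inequality `T(A) ≤ (|A| - 1) δ` with `A = s \ B`, and summing
these inequalities over the cells of `P` gives `Δ(S) ≤ Δ(P)`.
-/

section SetFunction

variable {ι M K : Type*} [DecidableEq ι] {s A B : Finset ι}

theorem ssubset_of_mem_parts {P : Finpartition s} (hP : 1 < #P.parts) (hA : A ∈ P.parts) :
    A ⊂ s := by
  refine (P.subset hA).ssubset_of_ne fun hAs => ?_
  obtain ⟨C, hC, hCA⟩ := exists_mem_ne hP A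
  obtain ⟨i, hi⟩ := P.nonempty_of_mem_parts hC
  exact hCA (P.eq_of_mem_parts hC hA hi (hAs ▸ P.subset hC hi))

section AddCommGroup

variable [AddCommGroup M]

/-- The total correlation (multi-information) `∑_{A ∈ P} h(A) - h(s)` of the cells of a partition
`P` of `s`, for an arbitrary set function `h` in the role of the entropy `A ↦ H(X_A)`. -/
def totalCorrelation (h : Finset ι → M) (P : Finpartition s) : M :=
  ∑ A ∈ P.parts, h A - h s

theorem totalCorrelation_bot (h : Finset ι → M) :
    totalCorrelation h (⊥ : Finpartition s) = ∑ i ∈ s, h {i} - h s := by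
  simp only [totalCorrelation, Finpartition.parts_bot, sum_map, Function.Embedding.coeFn_mk]

theorem totalCorrelation_bot_singleton (h : Finset ι → M) (i : ι) :
    totalCorrelation h (⊥ : Finpartition {i}) = 0 := by
  rw [totalCorrelation_bot, sum_singleton, sub_self]

theorem totalCorrelation_add_sum_bot (h : Finset ι → M) (P : Finpartition s) :
    totalCorrelation h P + ∑ A ∈ P.parts, totalCorrelation h (⊥ : Finpartition A) =
      totalCorrelation h (⊥ : Finpartition s) := by
  have sum_cells : ∑ A ∈ P.parts, ∑ i ∈ A, h {i} = ∑ i ∈ s, h {i} := by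
    conv_rhs => rw [← P.biUnion_parts]
    exact (sum_biUnion P.disjoint).symm
  simp only [totalCorrelation_bot, sum_sub_distrib, sum_cells]
  exact sub_add_sub_cancel' _ _ _

end AddCommGroup

section IsolatingPartition

theorem sdiff_notMem_parts (P : Finpartition B) : s \ B ∉ P.parts := fun hmem =>
  P.ne_empty hmem <| disjoint_self_iff_empty _ |>.1 <|
    sdiff_disjoint.mono_right (P.subset hmem)

/-- The partition `P_B` of `s` into the cell `s \ B` and the singletons of `B`. At the excluded
value `B = s` the empty cell `s \ B` is omitted. -/
def isolatingPartition (hB : B ⊆ s) : Finpartition s :=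
  (⊥ : Finpartition B).extendOfLE hB

theorem parts_isolatingPartition (hB : B ⊂ s) :
    (isolatingPartition hB.subset).parts = insert (s \ B) (⊥ : Finpartition B).parts :=
  Finpartition.parts_extendOfLE_of_lt _ hB

theorem card_parts_isolatingPartition (hB : B ⊂ s) :
    #(isolatingPartition hB.subset).parts = #B + 1 := by
  rw [parts_isolatingPartition hB, card_insert_of_notMem (sdiff_notMem_parts _),
    Finpartition.card_bot]

theorem sum_parts_isolatingPartition [AddCommMonoid M] (hB : B ⊂ s) (f : Finset ι → M) :
    ∑ A ∈ (isolatingPartition hB.subset).parts, f A = f (s \ B) + ∑ i ∈ B, f {i} := by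
  rw [parts_isolatingPartition hB, sum_insert (sdiff_notMem_parts _),
    Finpartition.parts_bot, sum_map]
  rfl

end IsolatingPartition

variable [Field K]

/-- The quantity `Δ(P)`: the total correlation of `P` divided by `|P| - 1`. It is meaningful for
`|P| ≥ 2`; for a single cell Lean's division makes it `0`. -/
def normalizedTotalCorrelation (h : Finset ι → K) (P : Finpartition s) : K :=
  totalCorrelation h P / (#P.parts - 1)

variable [LinearOrder K] [IsStrictOrderedRing K]

theorem normalizedTotalCorrelation_bot_le_iff (h : Finset ι → K) {P : Finpartition s}
    (hP : 1 < #P.parts) :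
    normalizedTotalCorrelation h (⊥ : Finpartition s) ≤ normalizedTotalCorrelation h P ↔
      ∑ A ∈ P.parts, totalCorrelation h (⊥ : Finpartition A) ≤
        ∑ A ∈ P.parts, (#A - 1) * normalizedTotalCorrelation h (⊥ : Finpartition s) := by
  set δ := normalizedTotalCorrelation h (⊥ : Finpartition s) with hδ
  have one_lt_card_parts : (1 : K) < #P.parts := mod_cast hP
  have one_lt_card : (1 : K) < #s := mod_cast hP.trans_le P.card_parts_le_card
  have totalCorrelation_eq : totalCorrelation h (⊥ : Finpartition s) = (#s - 1) * δ := by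
    rw [hδ, normalizedTotalCorrelation, Finpartition.card_bot,
      mul_div_cancel₀ _ (sub_pos.2 one_lt_card).ne']
  have sum_card_sub_one : ∑ A ∈ P.parts, ((#A : K) - 1) = #s - #P.parts := by
    rw [sum_sub_distrib, ← Nat.cast_sum, P.sum_card_parts, sum_const, nsmul_one]
  rw [← sum_mul, sum_card_sub_one, normalizedTotalCorrelation,
    le_div_iff₀ (sub_pos.2 one_lt_card_parts),
    eq_sub_of_add_eq (totalCorrelation_add_sum_bot h P), totalCorrelation_eq]
  constructor <;> intro hle <;> linarith

theorem normalizedTotalCorrelation_bot_le_isolatingPartition_iff (h : Finset ι → K)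
    (hB : B.Nonempty) (hBs : B ⊂ s) :
    normalizedTotalCorrelation h (⊥ : Finpartition s) ≤
        normalizedTotalCorrelation h (isolatingPartition hBs.subset) ↔
      totalCorrelation h (⊥ : Finpartition (s \ B)) ≤
        (#(s \ B) - 1) * normalizedTotalCorrelation h (⊥ : Finpartition s) := by
  have one_lt_card : 1 < #(isolatingPartition hBs.subset).parts := by
    rw [card_parts_isolatingPartition hBs]
    exact Nat.lt_add_of_pos_left hB.card_pos
  rw [normalizedTotalCorrelation_bot_le_iff h one_lt_card,
    sum_parts_isolatingPartition hBs fun A => totalCorrelation h (⊥ : Finpartition A),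
    sum_parts_isolatingPartition hBs]
  simp only [totalCorrelation_bot_singleton, card_singleton, Nat.cast_one, sub_self, zero_mul,
    sum_const_zero, add_zero]

theorem totalCorrelation_bot_le_of_le_isolatingPartition {h : Finset ι → K}
    (hiso : ∀ (B : Finset ι) (hB : B ⊆ s), B.Nonempty → #B + 2 ≤ #s →
      normalizedTotalCorrelation h (⊥ : Finpartition s) ≤
        normalizedTotalCorrelation h (isolatingPartition hB))
    (hA : A.Nonempty) (hAs : A ⊂ s) :
    totalCorrelation h (⊥ : Finpartition A) ≤
      (#A - 1) * normalizedTotalCorrelation h (⊥ : Finpartition s) := by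
  obtain ⟨i, rfl⟩ | hA' := hA.exists_eq_singleton_or_nontrivial
  · simp only [totalCorrelation_bot_singleton, card_singleton, Nat.cast_one, sub_self, zero_mul,
      le_refl]
  · have card_compl : #(s \ A) + 2 ≤ #s := by
      have := card_sdiff_add_card_eq_card hAs.subset
      have := one_lt_card_iff_nontrivial.2 hA'
      omega
    have compl_nonempty : (s \ A).Nonempty := sdiff_nonempty.2 hAs.not_subset
    have le_compl_compl := (normalizedTotalCorrelation_bot_le_isolatingPartition_iff h
      compl_nonempty (sdiff_ssubset hAs.subset hA)).1
      (hiso _ sdiff_subset compl_nonempty card_compl)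
    rwa [Finset.sdiff_sdiff_eq_self hAs.subset] at le_compl_compl

theorem stmt8_general (h : Finset ι → K) :
    (∀ P : Finpartition s, 2 ≤ #P.parts →
        normalizedTotalCorrelation h (⊥ : Finpartition s) ≤ normalizedTotalCorrelation h P) ↔
      ∀ (B : Finset ι) (hB : B ⊆ s), B.Nonempty → #B + 2 ≤ #s →
        normalizedTotalCorrelation h (⊥ : Finpartition s) ≤
          normalizedTotalCorrelation h (isolatingPartition hB) := by
  refine ⟨fun hmin B hBs hB hcard => hmin _ ?_, fun hiso P hP => ?_⟩
  · have hlt : B ⊂ s := hBs.ssubset_of_ne (by rintro rfl; omega)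
    rw [card_parts_isolatingPartition hlt]
    exact Nat.succ_le_succ hB.card_pos
  · exact (normalizedTotalCorrelation_bot_le_iff h hP).2 <| sum_le_sum fun A hA =>
      totalCorrelation_bot_le_of_le_isolatingPartition hiso (P.nonempty_of_mem_parts hA)
        (ssubset_of_mem_parts hP hA)

end SetFunction

section RandomVariables

variable {m : ℕ}

theorem isPartition_iff_exists_finpartition {P : Finset (Finset (Fin m))} :
    IsPartition P ↔ ∃ Q : Finpartition (univ : Finset (Fin m)), Q.parts = P := by
  constructor
  · rintro ⟨hne, hcover⟩
    exact ⟨.ofExistsUnique P (fun A _ => subset_univ A) (fun i _ => hcover i)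
      fun hempty => not_nonempty_empty (hne ∅ hempty), rfl⟩
  · rintro ⟨Q, rfl⟩
    exact ⟨fun A => Q.nonempty_of_mem_parts, fun i => Q.existsUnique_mem (mem_univ i)⟩

theorem parts_bot_eq_sPart : (⊥ : Finpartition (univ : Finset (Fin m))).parts = sPart m :=
  map_eq_image _ _

theorem parts_isolatingPartition_eq_partB {B : Finset (Fin m)} (hB : B ⊂ univ) :
    (isolatingPartition hB.subset).parts = partB B := by
  rw [parts_isolatingPartition hB, Finpartition.parts_bot, map_eq_image, ← compl_eq_univ_sdiff]
  rfl

variable {Ω : Type*} [MeasurableSpace Ω] (μ : Measure Ω) {𝒳 : Fin m → Type*}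
  [∀ i, Fintype (𝒳 i)] (X : ∀ i, Ω → 𝒳 i)

theorem ΔP_parts (P : Finpartition (univ : Finset (Fin m))) :
    ΔP μ X P.parts = normalizedTotalCorrelation (HX μ X) P :=
  one_div_mul_eq_div _ _

theorem ΔP_sPart :
    ΔP μ X (sPart m) =
      normalizedTotalCorrelation (HX μ X) (⊥ : Finpartition (univ : Finset (Fin m))) := by
  rw [← parts_bot_eq_sPart, ΔP_parts]

theorem ΔP_partB {B : Finset (Fin m)} (hB : B ⊂ univ) :
    ΔP μ X (partB B) = normalizedTotalCorrelation (HX μ X) (isolatingPartition hB.subset) := by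
  rw [← parts_isolatingPartition_eq_partB hB, ΔP_parts]

theorem forall_isPartition_ΔP_sPart_le_iff :
    (∀ P : Finset (Finset (Fin m)), IsPartition P → 2 ≤ #P → ΔP μ X (sPart m) ≤ ΔP μ X P) ↔
      ∀ P : Finpartition (univ : Finset (Fin m)), 2 ≤ #P.parts →
        normalizedTotalCorrelation (HX μ X) (⊥ : Finpartition (univ : Finset (Fin m))) ≤
          normalizedTotalCorrelation (HX μ X) P := by
  simp only [isPartition_iff_exists_finpartition, forall_exists_index,
    forall_apply_eq_imp_iff, ΔP_sPart, ΔP_parts]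

theorem forall_ΔP_sPart_le_partB_iff :
    (∀ B : Finset (Fin m), 1 ≤ #B → #B ≤ m - 2 → ΔP μ X (sPart m) ≤ ΔP μ X (partB B)) ↔
      ∀ (B : Finset (Fin m)) (hB : B ⊆ univ), B.Nonempty → #B + 2 ≤ #(univ : Finset (Fin m)) →
        normalizedTotalCorrelation (HX μ X) (⊥ : Finpartition (univ : Finset (Fin m))) ≤
          normalizedTotalCorrelation (HX μ X) (isolatingPartition hB) := by
  have card_le_iff {B : Finset (Fin m)} (hB : B.Nonempty) :
      #B ≤ m - 2 ↔ #B + 2 ≤ #(univ : Finset (Fin m)) := by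
    have := hB.card_pos
    rw [card_fin]
    omega
  have ssubset_univ {B : Finset (Fin m)} (hcard : #B + 2 ≤ #(univ : Finset (Fin m))) :
      B ⊂ univ := B.subset_univ.ssubset_of_ne (by rintro rfl; omega)
  refine forall_congr' fun B => ?_
  rw [forall_prop_of_true B.subset_univ, one_le_card]
  refine forall_congr' fun hB => ?_
  rw [card_le_iff hB]
  refine forall_congr' fun hcard => ?_
  rw [ΔP_sPart, ΔP_partB μ X (ssubset_univ hcard)]

end RandomVariables

/-- Proposition 1(a): `S` is a minimizer of `Δ` over all partitions of `[m]` with at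
least two cells iff `Δ(S) ≤ Δ(P_B)` for all `B` with `1 ≤ |B| ≤ m−2`. -/
theorem stmt8 {m : ℕ} (hm : 3 ≤ m) {Ω : Type*} [MeasurableSpace Ω] (μ : Measure Ω)
    [IsProbabilityMeasure μ]
    {𝒳 : Fin m → Type*} [∀ i, Fintype (𝒳 i)] [∀ i, MeasurableSpace (𝒳 i)]
    [∀ i, MeasurableSingletonClass (𝒳 i)]
    (X : ∀ i, Ω → 𝒳 i) (hX : ∀ i, Measurable (X i)) :
    (∀ P : Finset (Finset (Fin m)), IsPartition P → 2 ≤ P.card →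
        ΔP μ X (sPart m) ≤ ΔP μ X P)
      ↔ (∀ B : Finset (Fin m), 1 ≤ B.card → B.card ≤ m - 2 →
          ΔP μ X (sPart m) ≤ ΔP μ X (partB B)) := by
  rw [forall_isPartition_ΔP_sPart_le_iff, forall_ΔP_sPart_le_partB_iff]
  exact stmt8_general (HX μ X)
end
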